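/- arXiv:2008.01926 — 4 statements merged into one kernel-verified Lean document; each statement's English description precedes it below -/
import Mathlib

section
/- Let A be a Büchi automaton over alphabet 2^AP, let T = (S, R, s₀, AP, L) be a transition system, let B₁, …, Bₙ be nonblocking Büchi automata over 2^AP, and let P be their product automaton. For any subset I ⊆ {1, …, n} and any infinite path π = s⁰ s¹ s² ⋯ of T such that trace(π) ∈ L_ω(A) and trace(π) ∈ L_ω(Bᵢ) for every i ∈ I, there exists an accepting run r_P of P whose projection onto S is π and such that inf-vec(r_P)[i] = T for every i ∈ I. -/
/-!
Because `P` moves its components synchronously, a run of `P` over `π` is the same as a choice of a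
run on `trace π` for each of `A, B₁, …, Bₙ`, made independently. Take accepting runs for `A` and for
the `Bᵢ` with `i ∈ I`; for `i ∉ I` any run will do, and one exists since `Bᵢ` is nonblocking
(`Buchi.Nonblocking.exists_isRun`). Acceptance of the tuple run and its `inf-vec` are read off
componentwise.
-/

open scoped Classical

structure Buchi (Q A : Type*) where
  delta : Q → A → Q → Prop
  q0 : Q
  F : Set Q

def Buchi.IsRun {Q A : Type*} (B : Buchi Q A) (σ : ℕ → A) (r : ℕ → Q) : Prop :=
  r 0 = B.q0 ∧ ∀ j, B.delta (r j) (σ j) (r (j + 1))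

def Buchi.AcceptingRun {Q A : Type*} (B : Buchi Q A) (r : ℕ → Q) : Prop :=
  {j | r j ∈ B.F}.Infinite

def Buchi.LangOmega {Q A : Type*} (B : Buchi Q A) : Set (ℕ → A) :=
  {σ | ∃ r, B.IsRun σ r ∧ B.AcceptingRun r}

def Buchi.Nonblocking {Q A : Type*} (B : Buchi Q A) : Prop :=
  ∀ q a, ∃ q', B.delta q a q'

structure TransSys (S AP : Type*) where
  R : S → S → Prop
  s0 : S
  L : S → Set AP

def TransSys.IsPath {S AP : Type*} (T : TransSys S AP) (π : ℕ → S) : Prop :=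
  π 0 = T.s0 ∧ ∀ j, T.R (π j) (π (j + 1))

def TransSys.trace {S AP : Type*} (T : TransSys S AP) (π : ℕ → S) : ℕ → Set AP :=
  fun j => T.L (π j)

section Product

variable {Q S AP : Type*} {n : ℕ} {Qi : Fin n → Type*}

/-- Initial state of the product automaton. -/
def prodInit (A : Buchi Q (Set AP)) (T : TransSys S AP)
    (B : ∀ i, Buchi (Qi i) (Set AP)) : Q × S × (∀ i, Qi i) :=
  (A.q0, T.s0, fun i => (B i).q0)

/-- Transition relation of the product automaton. -/
def prodDelta (A : Buchi Q (Set AP)) (T : TransSys S AP)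
    (B : ∀ i, Buchi (Qi i) (Set AP)) :
    (Q × S × (∀ i, Qi i)) → (Q × S × (∀ i, Qi i)) → Prop :=
  fun p p' =>
    T.R p.2.1 p'.2.1 ∧ A.delta p.1 (T.L p.2.1) p'.1 ∧
      ∀ i, (B i).delta (p.2.2 i) (T.L p.2.1) (p'.2.2 i)

/-- `r` is a run of the product automaton. -/
def ProdIsRun (A : Buchi Q (Set AP)) (T : TransSys S AP)
    (B : ∀ i, Buchi (Qi i) (Set AP)) (r : ℕ → Q × S × (∀ i, Qi i)) : Prop :=
  r 0 = prodInit A T B ∧ ∀ j, prodDelta A T B (r j) (r (j + 1))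

/-- `r` is accepting for the product automaton: it visits
`F_P = F × S × Q₁ × ⋯ × Qₙ` infinitely often. -/
def ProdAccepting (A : Buchi Q (Set AP)) (r : ℕ → Q × S × (∀ i, Qi i)) : Prop :=
  {j | (r j).1 ∈ A.F}.Infinite

/-- `inf-vec(r)[i] = T` iff the weight vector's `i`-th entry (i.e. membership of the
`i`-th component in `Fᵢ`) is true at infinitely many positions. -/
def infVec (B : ∀ i, Buchi (Qi i) (Set AP)) (r : ℕ → Q × S × (∀ i, Qi i))
    (i : Fin n) : Prop :=
  {j | (r j).2.2 i ∈ (B i).F}.Infinite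

end Product

/-- `f_w(v) = Σ_{i : v[i] = F} n^{n−i}`, where index `i : Fin n` stands for constraint `i+1`. -/
noncomputable def fCost (n : ℕ) (v : Fin n → Prop) : ℕ :=
  ∑ i : Fin n, if v i then 0 else n ^ (n - 1 - i.val)

theorem Buchi.Nonblocking.exists_isRun {Q A : Type*} {B : Buchi Q A} (hB : B.Nonblocking)
    (σ : ℕ → A) : ∃ r, B.IsRun σ r := by
  choose next hnext using hB
  exact ⟨fun j => Nat.rec B.q0 (fun k q => next q (σ k)) j, rfl, fun _ => hnext _ _⟩

/-- For any `I ⊆ {1,…,n}` and any path `π` of `T` with `trace(π) ∈ L_ω(A)` and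
`trace(π) ∈ L_ω(Bᵢ)` for all `i ∈ I`, there is an accepting run of `P` projecting to `π`
whose `inf-vec` is `T` at every `i ∈ I`. -/
theorem path_lifts_to_accepting_product_run
    {Q S AP : Type*} {n : ℕ} {Qi : Fin n → Type*}
    [Finite Q] [Finite S] [∀ i, Finite (Qi i)]
    (A : Buchi Q (Set AP)) (T : TransSys S AP)
    (B : ∀ i, Buchi (Qi i) (Set AP)) (hB : ∀ i, (B i).Nonblocking)
    (I : Set (Fin n)) (π : ℕ → S) (hπ : T.IsPath π)
    (hA : T.trace π ∈ A.LangOmega)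
    (hI : ∀ i ∈ I, T.trace π ∈ (B i).LangOmega) :
    ∃ r : ℕ → Q × S × (∀ i, Qi i),
      ProdIsRun A T B r ∧ ProdAccepting A r ∧
        (∀ j, (r j).2.1 = π j) ∧ ∀ i ∈ I, infVec B r i := by
  obtain ⟨rA, ⟨hA0, hAδ⟩, hAacc⟩ := hA
  -- Uniformly in `i`: a run of `Bᵢ` that is required to be accepting only when `i ∈ I`.
  have hrun : ∀ i, ∃ r, (B i).IsRun (T.trace π) r ∧ (i ∈ I → (B i).AcceptingRun r) := by
    intro i
    by_cases hi : i ∈ I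
    · obtain ⟨r, hr, hacc⟩ := hI i hi
      exact ⟨r, hr, fun _ => hacc⟩
    · obtain ⟨r, hr⟩ := (hB i).exists_isRun (T.trace π)
      exact ⟨r, hr, fun h => absurd h hi⟩
  choose rB hrB hBacc using hrun
  refine ⟨fun j => (rA j, π j, fun i => rB i j), ⟨?_, fun j => ?_⟩, hAacc, fun _ => rfl, hBacc⟩
  · simp only [prodInit, hA0, hπ.1, fun i => (hrB i).1]
  · exact ⟨hπ.2 j, hAδ j, fun i => (hrB i).2 j⟩
end

section
/- Let P be a product automaton built from a Büchi automaton A, a transition system T, and n nonblocking Büchi automata B₁, …, Bₙ. If P has at least one accepting run, then P has an accepting run r* that is ultimately periodic (a lasso, i.e., there exist k ≥ 0 and p ≥ 1 with r*(j + p) = r*(j) for all j ≥ k) and such that f_w(inf-vec(r*)) ≤ f_w(inf-vec(r)) for every accepting run r of P. -/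
/-!
Costs are natural numbers, so some accepting run `r` has minimum cost. Some state `x` occurs
infinitely often in `r`, since `P` has finitely many states. Starting from an occurrence of `x`,
wait until every set of states that `r` visits infinitely often has been visited, and then until
`x` recurs; repeating this segment forever gives a lasso `r'` that visits infinitely often every
set that `r` does (`exists_lasso`). In particular `r'` is accepting, and each true entry of the
vector of `r` stays true for `r'`, so the cost of `r'` is at most that of `r` (`fCost_anti`).
-/


open scoped Classical

/-- Every infinite path in a finite graph can be replaced by a lasso with the same start that
visits infinitely often every set of states the path visits infinitely often. -/
theorem exists_lasso {X : Type*} [Finite X] (R : X → X → Prop) (r : ℕ → X)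
    (hr : ∀ j, R (r j) (r (j + 1))) :
    ∃ r' : ℕ → X, r' 0 = r 0 ∧ (∀ j, R (r' j) (r' (j + 1))) ∧
      (∃ k p : ℕ, 1 ≤ p ∧ ∀ j, k ≤ j → r' (j + p) = r' j) ∧
      ∀ s : Set X, {j | r j ∈ s}.Infinite → {j | r' j ∈ s}.Infinite := by
  obtain ⟨x, hx⟩ := Finite.exists_infinite_fiber r
  have hx' : (r ⁻¹' {x}).Infinite := Set.infinite_coe_iff.mp hx
  obtain ⟨k, hk⟩ := hx'.nonempty
  have hk : r k = x := hk
  have hvisit : ∀ s : Set X, ∃ m, {j | r j ∈ s}.Infinite → k ≤ m ∧ r m ∈ s := by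
    intro s
    by_cases hs : {j | r j ∈ s}.Infinite
    · obtain ⟨m, hm, hkm⟩ := hs.exists_gt k
      exact ⟨m, fun _ => ⟨hkm.le, hm⟩⟩
    · exact ⟨0, fun h => absurd h hs⟩
  choose m hm using hvisit
  obtain ⟨M, hM⟩ := (Set.finite_range m).bddAbove
  obtain ⟨e, he, hMe⟩ := hx'.exists_gt (max k M)
  have he : r e = x := he
  obtain ⟨hke, hMe⟩ := max_lt_iff.mp hMe
  obtain ⟨p, rfl⟩ := Nat.exists_eq_add_of_lt hke
  have hp : 0 < p + 1 := p.succ_pos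
  -- follow `r` up to time `k`, then repeat the segment `r k, …, r (k + p)` of period `p + 1`
  refine ⟨fun j => r (if j < k then j else k + (j - k) % (p + 1)), ?_, ?_, ⟨k, p + 1, hp, ?_⟩, ?_⟩
  · by_cases h0 : 0 < k
    · simp [h0]
    · obtain rfl : k = 0 := by omega
      simp
  · intro j
    dsimp only
    by_cases h1 : j + 1 < k
    · rw [if_pos (by omega : j < k), if_pos h1]
      exact hr j
    rw [if_neg h1]
    by_cases h2 : j < k
    · obtain rfl : k = j + 1 := by omega
      simpa using hr j
    rw [if_neg h2, show j + 1 - k = (j - k) + 1 by omega, Nat.add_mod_eq_ite]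
    have hlt := Nat.mod_lt (j - k) hp
    have hstep := hr (k + (j - k) % (p + 1))
    rcases Nat.eq_zero_or_pos p with rfl | hp0
    · simp only [zero_add, Nat.mod_one, add_zero] at *
      simpa [hk, he] using hstep
    rw [Nat.mod_eq_of_lt (by omega : 1 < p + 1)]
    split_ifs with h3
    · -- the end of the segment is the state `x`, which is also its beginning
      have h4 : (j - k) % (p + 1) = p := by omega
      rw [h4] at hstep ⊢
      simpa [hk, he] using hstep
    · exact hstep
  · intro j hj
    dsimp only
    rw [if_neg (by omega), if_neg (by omega), show j + (p + 1) - k = j - k + (p + 1) by omega,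
      Nat.add_mod_right]
  · intro s hs
    obtain ⟨hkm, hms⟩ := hm s hs
    have hmM : m s ≤ M := hM ⟨s, rfl⟩
    refine Set.infinite_of_forall_exists_gt fun a => ⟨m s + (p + 1) * (a + 1), ?_, by nlinarith⟩
    have hmod : (m s + (p + 1) * (a + 1) - k) % (p + 1) = m s - k := by
      rw [show m s + (p + 1) * (a + 1) - k = m s - k + (p + 1) * (a + 1) by omega,
        Nat.add_mul_mod_self_left, Nat.mod_eq_of_lt (by omega)]
    -- `m s` lies inside the segment, so each of its translates by a multiple of the period visits `s`
    change r (if _ then _ else _) ∈ s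
    rw [if_neg (by omega), hmod, Nat.add_sub_cancel' hkm]
    exact hms

theorem fCost_anti {n : ℕ} {v w : Fin n → Prop} (h : ∀ i, v i → w i) :
    fCost n w ≤ fCost n v := by
  refine Finset.sum_le_sum fun i _ => ?_
  by_cases hv : v i
  · simp [hv, h i hv]
  · by_cases hw : w i <;> simp [hv, hw]

/-- If `P` has an accepting run, then it has an ultimately periodic (lasso)
accepting run whose cost `f_w(inf-vec(·))` is minimum among all accepting runs. -/
theorem exists_min_cost_lasso_accepting_run
    {Q S AP : Type*} {n : ℕ} {Qi : Fin n → Type*}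
    [Finite Q] [Finite S] [∀ i, Finite (Qi i)]
    (A : Buchi Q (Set AP)) (T : TransSys S AP)
    (B : ∀ i, Buchi (Qi i) (Set AP)) (hB : ∀ i, (B i).Nonblocking)
    (h : ∃ r : ℕ → Q × S × (∀ i, Qi i), ProdIsRun A T B r ∧ ProdAccepting A r) :
    ∃ rstar : ℕ → Q × S × (∀ i, Qi i),
      ProdIsRun A T B rstar ∧ ProdAccepting A rstar ∧
        (∃ k p : ℕ, 1 ≤ p ∧ ∀ j, k ≤ j → rstar (j + p) = rstar j) ∧
        ∀ r : ℕ → Q × S × (∀ i, Qi i), ProdIsRun A T B r → ProdAccepting A r →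
          fCost n (infVec B rstar) ≤ fCost n (infVec B r) := by
  let runs : Set (ℕ → Q × S × (∀ i, Qi i)) := {r | ProdIsRun A T B r ∧ ProdAccepting A r}
  let cost : (ℕ → Q × S × (∀ i, Qi i)) → ℕ := fun r => fCost n (infVec B r)
  have hne : runs.Nonempty := h
  obtain ⟨hr, hacc⟩ := Function.argminOn_mem cost runs hne
  set r := Function.argminOn cost runs hne
  obtain ⟨r', h0, hstep, hlasso, hvisit⟩ := exists_lasso (prodDelta A T B) r hr.2
  refine ⟨r', ⟨h0.trans hr.1, hstep⟩, hvisit {x | x.1 ∈ A.F} hacc, hlasso, fun r₂ hr₂ hacc₂ => ?_⟩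
  calc fCost n (infVec B r') ≤ fCost n (infVec B r) :=
        fCost_anti fun i => hvisit {x | x.2.2 i ∈ (B i).F}
    _ ≤ fCost n (infVec B r₂) := Function.argminOn_le cost runs ⟨hr₂, hacc₂⟩
end

section
/- Let P be a product automaton built from a Büchi automaton A, a transition system T, and n nonblocking Büchi automata B₁, …, Bₙ. For every accepting run r of P, there exists an ultimately periodic accepting run r' of P (i.e., there exist k ≥ 0 and p ≥ 1 with r'(j + p) = r'(j) for all j ≥ k) such that inf-vec(r')[i] = T for every i with inf-vec(r)[i] = T; in particular f_w(inf-vec(r')) ≤ f_w(inf-vec(r)). -/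
/-!
The state space of the product is finite, so some state `c` occurs infinitely often in `r`.
Starting from an occurrence `k` of `c`, one can wait until every set of states that `r` visits
infinitely often has been visited again, and then until the next occurrence `k + p` of `c`
(`exists_recurrent_segment`). Running `r` up to `k` and then repeating the segment `[k, k + p)`
forever is again a run (`lasso_step`), and it visits infinitely often every set of states that
meets the segment (`lasso_infinite`), in particular the accepting set of the product and each `Fᵢ`
that `r` visits infinitely often. The cost is antitone in the vector, hence does not increase.
-/

open scoped Classical

/-- The sequence that follows `r` up to time `k` and then repeats the segment `[k, k + p)` of `r`
forever. -/
def lasso {α : Type*} (r : ℕ → α) (k p : ℕ) (j : ℕ) : α :=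
  if j < k then r j else r (k + (j - k) % p)

theorem lasso_step {α : Type*} {δ : α → α → Prop} {r : ℕ → α} (hr : ∀ j, δ (r j) (r (j + 1)))
    {k p : ℕ} (hp : 1 ≤ p) (hc : r (k + p) = r k) (j : ℕ) :
    δ (lasso r k p j) (lasso r k p (j + 1)) := by
  unfold lasso
  rcases lt_or_ge j k with h | h
  · rw [if_pos h]
    split_ifs with h'
    · exact hr j
    · obtain rfl : k = j + 1 := by omega
      simpa using hr j
  · rw [if_neg (by omega), if_neg (by omega), Nat.sub_add_comm h, ← Nat.mod_add_mod]
    have hlt : (j - k) % p < p := Nat.mod_lt _ hp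
    have hstep := hr (k + (j - k) % p)
    rcases (Nat.succ_le_of_lt hlt).lt_or_eq with h' | h'
    · rw [Nat.mod_eq_of_lt h']
      exact hstep
    · have hend : (j - k) % p + 1 = p := h'
      -- At the end of the loop the successor is `r (k + p)`, which equals `r k`.
      rw [add_assoc, hend, hc] at hstep
      rw [hend, Nat.mod_self]
      exact hstep

theorem lasso_periodic {α : Type*} (r : ℕ → α) (k p : ℕ) {j : ℕ} (hj : k ≤ j) :
    lasso r k p (j + p) = lasso r k p j := by
  unfold lasso
  rw [if_neg (by omega), if_neg (by omega), Nat.sub_add_comm hj, Nat.add_mod_right]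

theorem lasso_infinite {α : Type*} {r : ℕ → α} {k p : ℕ} {X : Set α} {m : ℕ}
    (hkm : k ≤ m) (hmp : m < k + p) (hm : r m ∈ X) : {j | lasso r k p j ∈ X}.Infinite := by
  rw [Set.infinite_iff_exists_gt]
  intro N
  refine ⟨m + p * (N + 1), ?_, ?_⟩
  · have h1 : (m - k) % p = m - k := Nat.mod_eq_of_lt (by omega)
    have h2 : ¬ m + p * (N + 1) < k := by omega
    simp only [lasso, Set.mem_ofPred_eq, if_neg h2]
    rwa [Nat.sub_add_comm hkm, Nat.add_mul_mod_self_left, h1, Nat.add_sub_cancel' hkm]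
  · have : 1 * (N + 1) ≤ p * (N + 1) := Nat.mul_le_mul_right _ (by omega)
    omega

/-- A sequence in a finite type has a segment `[k, k + p)` that starts and ends at the same value
and meets every set the sequence visits infinitely often. -/
theorem exists_recurrent_segment {α : Type*} [Finite α] (r : ℕ → α) :
    ∃ k p : ℕ, 1 ≤ p ∧ r (k + p) = r k ∧
      ∀ X : Set α, {j | r j ∈ X}.Infinite → ∃ m, k ≤ m ∧ m < k + p ∧ r m ∈ X := by
  obtain ⟨c, hc⟩ := Finite.exists_infinite_fiber r
  have hc : (r ⁻¹' {c}).Infinite := Set.infinite_coe_iff.mp hc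
  obtain ⟨k, hk⟩ := hc.nonempty
  have hex : ∀ X : Set α, ∃ m, {j | r j ∈ X}.Infinite → k ≤ m ∧ r m ∈ X := by
    intro X
    by_cases hX : {j | r j ∈ X}.Infinite
    · obtain ⟨m, hm, hkm⟩ := hX.exists_gt k
      exact ⟨m, fun _ => ⟨hkm.le, hm⟩⟩
    · exact ⟨0, fun h => absurd h hX⟩
  choose m hm using hex
  -- There are only finitely many sets of values, so the chosen visiting times are bounded.
  obtain ⟨M, hM⟩ := (Set.finite_range m).bddAbove
  obtain ⟨l, hl, hlt⟩ := hc.exists_gt (max k M)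
  have hk : r k = c := hk
  have hl : r l = c := hl
  refine ⟨k, l - k, by omega, ?_, fun X hX => ⟨m X, (hm X hX).1, ?_, (hm X hX).2⟩⟩
  · rw [Nat.add_sub_cancel' (by omega), hk, hl]
  · have : m X ≤ M := hM ⟨X, rfl⟩
    omega

/-- For every accepting run `r` of `P` there is an ultimately periodic
accepting run `r'` with `inf-vec(r')[i] = T` whenever `inf-vec(r)[i] = T`; in particular
`f_w(inf-vec(r')) ≤ f_w(inf-vec(r))`. -/
theorem accepting_run_to_lasso_preserving_infVec
    {Q S AP : Type*} {n : ℕ} {Qi : Fin n → Type*}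
    [Finite Q] [Finite S] [∀ i, Finite (Qi i)]
    (A : Buchi Q (Set AP)) (T : TransSys S AP)
    (B : ∀ i, Buchi (Qi i) (Set AP)) (hB : ∀ i, (B i).Nonblocking)
    (r : ℕ → Q × S × (∀ i, Qi i))
    (hrun : ProdIsRun A T B r) (hacc : ProdAccepting A r) :
    ∃ r' : ℕ → Q × S × (∀ i, Qi i),
      ProdIsRun A T B r' ∧ ProdAccepting A r' ∧
        (∃ k p : ℕ, 1 ≤ p ∧ ∀ j, k ≤ j → r' (j + p) = r' j) ∧
        (∀ i : Fin n, infVec B r i → infVec B r' i) ∧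
        fCost n (infVec B r') ≤ fCost n (infVec B r) := by
  obtain ⟨k, p, hp, hc, hseg⟩ := exists_recurrent_segment r
  have hinf : ∀ X : Set (Q × S × (∀ i, Qi i)), {j | r j ∈ X}.Infinite →
      {j | lasso r k p j ∈ X}.Infinite := by
    intro X hX
    obtain ⟨m, hkm, hmp, hm⟩ := hseg X hX
    exact lasso_infinite hkm hmp hm
  have hvec : ∀ i : Fin n, infVec B r i → infVec B (lasso r k p) i :=
    fun i => hinf {x | x.2.2 i ∈ (B i).F}
  refine ⟨lasso r k p, ⟨?_, lasso_step hrun.2 hp hc⟩, hinf {x | x.1 ∈ A.F} hacc,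
    ⟨k, p, hp, fun j hj => lasso_periodic r k p hj⟩, hvec, fCost_anti hvec⟩
  rw [← hrun.1]
  unfold lasso
  split_ifs with h
  · rfl
  · obtain rfl : k = 0 := by omega
    simp
end

section
/- Let A be a Büchi automaton over alphabet 2^AP, let T = (S, R, s₀, AP, L) be a transition system, let B₁, …, Bₙ be nonblocking Büchi automata over 2^AP, and let P be their product automaton. For every accepting run r of P, the projection π of r onto S is an infinite path of T with trace(π) ∈ L_ω(A), and f_ω(trace(π)) ≤ f_w(inf-vec(r)), where f_ω(σ) = Σ_{i : σ ∉ L_ω(Bᵢ)} n^{n−i} for an infinite word σ over 2^AP. -/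
/-!
Every component of a run of the product reads the same word, namely the trace of the
`S`-component. Hence the `Q`-component is an accepting run of `A` on that trace, and the `i`-th
component is a run of `Bᵢ` on it, accepting as soon as the `i`-th entry of `infVec` is true. So
every constraint violated by the trace is a false entry of `infVec`, and the costs compare term
by term. Since other runs of `Bᵢ` on the trace may be accepting, the inequality can be strict.
-/

open scoped Classical

section Fomega

variable {Q S AP : Type*} {n : ℕ} {Qi : Fin n → Type*}

/-- `f_ω(σ) = Σ_{i : σ ∉ L_ω(Bᵢ)} n^{n−i}`, where index `i : Fin n` stands for
constraint `i + 1`. -/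
noncomputable def fOmega (B : ∀ i, Buchi (Qi i) (Set AP)) (σ : ℕ → Set AP) : ℕ :=
  ∑ i : Fin n, if σ ∈ (B i).LangOmega then 0 else n ^ (n - 1 - i.val)

end Fomega

/-- For every accepting run `r` of the product automaton `P`, the projection
`π` of `r` onto `S` is an infinite path of `T` with `trace(π) ∈ L_ω(A)` and
`f_ω(trace(π)) ≤ f_w(inf-vec(r))`. -/
theorem accepting_run_projection_cost_le
    {Q S AP : Type*} {n : ℕ} {Qi : Fin n → Type*}
    [Finite Q] [Finite S] [∀ i, Finite (Qi i)]
    (A : Buchi Q (Set AP)) (T : TransSys S AP)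
    (B : ∀ i, Buchi (Qi i) (Set AP)) (hB : ∀ i, (B i).Nonblocking)
    (r : ℕ → Q × S × (∀ i, Qi i))
    (hrun : ProdIsRun A T B r) (hacc : ProdAccepting A r) :
    T.IsPath (fun j => (r j).2.1) ∧
      T.trace (fun j => (r j).2.1) ∈ A.LangOmega ∧
      fOmega B (T.trace (fun j => (r j).2.1)) ≤ fCost n (infVec B r) := by
  obtain ⟨h0, hstep⟩ := hrun
  refine ⟨⟨by simp [h0, prodInit], fun j => (hstep j).1⟩,
    ⟨fun j => (r j).1, ⟨by simp [h0, prodInit], fun j => (hstep j).2.1⟩, hacc⟩, ?_⟩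
  unfold fOmega fCost
  refine Finset.sum_le_sum fun i _ => ?_
  by_cases hv : infVec B r i
  · have hmem : T.trace (fun j => (r j).2.1) ∈ (B i).LangOmega :=
      ⟨fun j => (r j).2.2 i, ⟨by simp [h0, prodInit], fun j => (hstep j).2.2 i⟩, hv⟩
    simp [hmem]
  · rw [if_neg hv]
    split_ifs <;> simp
end
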